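/- The number of triples (x, y, z) of elements of Sym_5 with x of order 2, y of order 4, z of order 5 and x*y*z = 1 is exactly 120. -/

import Mathlib

lemma aux_card_z :
    ((Finset.univ : Finset (Equiv.Perm (Fin 5))).filter
      (fun z => z ≠ 1 ∧ ∀ i, z (z (z (z (z i)))) = i)).card = 24 := by
  decide +kernel

lemma aux_card_x :
    ((Finset.univ : Finset (Equiv.Perm (Fin 5))).filter (fun x => (x * x = 1 ∧ x ≠ 1) ∧
      (x * finRotate 5) * (x * finRotate 5) * ((x * finRotate 5) * (x * finRotate 5)) = 1 ∧
      (x * finRotate 5) * (x * finRotate 5) ≠ 1)).card = 5 := by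
  decide +kernel

lemma aux_two (x : Equiv.Perm (Fin 5)) : orderOf x = 2 ↔ x * x = 1 ∧ x ≠ 1 := by
  rw [orderOf_eq_prime_iff, pow_two]

lemma aux_four (y : Equiv.Perm (Fin 5)) :
    orderOf y = 4 ↔ y * y * (y * y) = 1 ∧ y * y ≠ 1 := by
  have e : y * y * (y * y) = y ^ 4 := by simp only [pow_succ, pow_zero, one_mul, mul_assoc]
  rw [e, ← pow_two]
  constructor
  · intro h
    refine ⟨h ▸ pow_orderOf_eq_one y, fun h2 => ?_⟩
    have := orderOf_dvd_of_pow_eq_one h2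
    rw [h] at this
    omega
  · rintro ⟨h4, h2⟩
    exact orderOf_eq_prime_pow (p := 2) (n := 1) (by simpa using h2) (by simpa using h4)

lemma aux_five (z : Equiv.Perm (Fin 5)) :
    orderOf z = 5 ↔ z ≠ 1 ∧ (∀ i, z (z (z (z (z i)))) = i) := by
  have : Fact (Nat.Prime 5) := ⟨by norm_num⟩
  rw [orderOf_eq_prime_iff, Equiv.ext_iff, and_comm]
  rfl

lemma aux_cycleType (z : Equiv.Perm (Fin 5)) (h : orderOf z = 5) : z.cycleType = {5} := by
  have hc : z.IsCycle := Equiv.Perm.isCycle_of_prime_order' (by rw [h]; norm_num) (by rw [h]; simp)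
  rw [hc.cycleType, ← hc.orderOf, h]

lemma aux_conj (z : Equiv.Perm (Fin 5)) (h : orderOf z = 5) :
    ∃ g : Equiv.Perm (Fin 5), g * finRotate 5 * g⁻¹ = z := by
  rw [← isConj_iff]
  apply Equiv.Perm.isConj_of_cycleType_eq
  rw [aux_cycleType z h, cycleType_finRotate]

lemma aux_order_conj (g x : Equiv.Perm (Fin 5)) : orderOf (g * x * g⁻¹) = orderOf x :=
  (MulAut.conj g).orderOf_eq x

lemma aux_fiber (z : Equiv.Perm (Fin 5)) (h : orderOf z = 5) :
    Nat.card {x : Equiv.Perm (Fin 5) // orderOf x = 2 ∧ orderOf (x * z) = 4} = 5 := by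
  obtain ⟨g, rfl⟩ := aux_conj z h
  refine Eq.trans ?_ aux_card_x
  rw [← Nat.card_eq_finsetCard]
  symm
  refine Nat.card_congr ((MulAut.conj g).toEquiv.subtypeEquiv fun x => ?_)
  rw [Finset.mem_filter, ← aux_two, ← aux_four]
  have e : g * x * g⁻¹ * (g * finRotate 5 * g⁻¹) = g * (x * finRotate 5) * g⁻¹ := by group
  change _ ↔ orderOf (g * x * g⁻¹) = 2 ∧ orderOf (g * x * g⁻¹ * (g * finRotate 5 * g⁻¹)) = 4
  rw [e, aux_order_conj, aux_order_conj]
  simp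

theorem card_245_triples_sym5 :
    Nat.card {t : Equiv.Perm (Fin 5) × Equiv.Perm (Fin 5) × Equiv.Perm (Fin 5) //
      orderOf t.1 = 2 ∧ orderOf t.2.1 = 4 ∧ orderOf t.2.2 = 5 ∧
      t.1 * t.2.1 * t.2.2 = 1} = 120 := by
  have e : {t : Equiv.Perm (Fin 5) × Equiv.Perm (Fin 5) × Equiv.Perm (Fin 5) //
      orderOf t.1 = 2 ∧ orderOf t.2.1 = 4 ∧ orderOf t.2.2 = 5 ∧
      t.1 * t.2.1 * t.2.2 = 1} ≃ Σ z : {z : Equiv.Perm (Fin 5) // orderOf z = 5},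
        {x : Equiv.Perm (Fin 5) // orderOf x = 2 ∧ orderOf (x * z.1) = 4} := by
    refine
      { toFun := fun t => ⟨⟨t.1.2.2⁻¹, ?_⟩, ⟨t.1.1⁻¹, ?_⟩⟩
        invFun := fun p => ⟨(p.2.1⁻¹, p.2.1 * p.1.1, p.1.1⁻¹), ?_⟩
        left_inv := ?_
        right_inv := ?_ }
    · rw [orderOf_inv]; exact t.2.2.2.1
    · obtain ⟨⟨x, y, z⟩, hx, hy, hz, h⟩ := t
      have : x⁻¹ * z⁻¹ = y := by
        rw [← eq_inv_of_mul_eq_one_left h, inv_mul_cancel_left]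
      exact ⟨by rw [orderOf_inv]; exact hx, by rw [this]; exact hy⟩
    · obtain ⟨⟨z, hz⟩, ⟨x, hx, hy⟩⟩ := p
      refine ⟨by rw [orderOf_inv]; exact hx, hy, by rw [orderOf_inv]; exact hz, ?_⟩
      simp
    · rintro ⟨⟨x, y, z⟩, hx, hy, hz, h⟩
      have : x⁻¹ * z⁻¹ = y := by
        rw [← eq_inv_of_mul_eq_one_left h, inv_mul_cancel_left]
      simp only [this, inv_inv]
    · rintro ⟨⟨z, hz⟩, ⟨x, hx, hy⟩⟩
      rfl
  rw [Nat.card_congr e, Nat.card_sigma, Finset.sum_congr rfl fun z _ => aux_fiber z.1 z.2,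
    Finset.sum_const, Finset.card_univ, ← Nat.card_eq_fintype_card]
  have h24 : Nat.card {z : Equiv.Perm (Fin 5) // orderOf z = 5} = 24 := by
    rw [← aux_card_z, ← Nat.card_eq_finsetCard]
    refine Nat.card_congr (Equiv.subtypeEquivRight fun z => ?_)
    rw [Finset.mem_filter, ← aux_five]
    simp
  rw [h24]
  rfl
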